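/- arXiv:2005.12098 — 2 statements merged into one kernel-verified Lean document; each statement's English description precedes it below -/
import Mathlib

section
/- Let l : [0,∞) → ℝ be càdlàg with E[h(0, Y_0)] ≥ l_0. Then there exists a unique solution (X, k) of the Skorokhod problem with mean minimality condition and lower barrier l associated with (h, Y, l); moreover k_t = sup_{s≤t} (l̄_s − E[Y_s])⁺ for every t ≥ 0, where l̄ : [0,∞) → ℝ is the unique function with E[h(s, Y_s − E[Y_s] + l̄_s)] = l_s for all s ≥ 0. -/
open MeasureTheory Filter Set Function Topology

noncomputable section

/-- A function with values in a topological space is càdlàg on `[0,∞)`: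
right-continuous at every `t ≥ 0` and admitting a left limit at every `t > 0`. -/
def CadlagOn {E : Type*} [TopologicalSpace E] (f : ℝ → E) : Prop :=
  (∀ t : ℝ, 0 ≤ t → ContinuousWithinAt f (Set.Ici t) t) ∧
  ∀ t : ℝ, 0 < t → ∃ L : E, Filter.Tendsto f (nhdsWithin t (Set.Iio t)) (nhds L)

/-- Condition (H) on `h : [0,∞) × ℝ → ℝ` with constants `Mh, Lh, ch, Ch`. -/
structure CondH (h : ℝ → ℝ → ℝ) (Mh Lh ch Ch : ℝ) : Prop where
  meas : Measurable (Function.uncurry h)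
  Mh_pos : 0 < Mh
  Lh_pos : 0 < Lh
  ch_pos : 0 < ch
  Ch_pos : 0 < Ch
  growth : ∀ t x : ℝ, 0 ≤ t → |h t x| ≤ Mh * (1 + |x|)
  strict_mono : ∀ t : ℝ, 0 ≤ t → StrictMono (h t)
  lip_time : ∀ s t x : ℝ, 0 ≤ s → 0 ≤ t → |h t x - h s x| ≤ Lh * |t - s|
  lip_lower : ∀ t x y : ℝ, 0 ≤ t → ch * |x - y| ≤ |h t x - h t y|
  lip_upper : ∀ t x y : ℝ, 0 ≤ t → |h t x - h t y| ≤ Ch * |x - y|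

/-- A process with càdlàg paths, integrable values, and values uniformly integrable
on every compact time interval. -/
structure NiceProcess {Ω : Type*} [MeasurableSpace Ω] (μ : Measure Ω) (Y : ℝ → Ω → ℝ) : Prop where
  cadlag : ∀ ω, CadlagOn fun t => Y t ω
  integrable : ∀ t : ℝ, 0 ≤ t → Integrable (Y t) μ
  unifInt : ∀ q : ℝ, 0 ≤ q → UniformIntegrable (fun t : Set.Icc (0:ℝ) q => Y t.1) 1 μ

/-- Solution of the Skorokhod problem with mean minimality condition and two constraints
associated with `(h, Y, l, u)`. -/
def MeanSP {Ω : Type*} [MeasurableSpace Ω] (μ : Measure Ω) (h : ℝ → ℝ → ℝ)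
    (Y : ℝ → Ω → ℝ) (l u : ℝ → ℝ) (X : ℝ → Ω → ℝ) (k : ℝ → ℝ) : Prop :=
  (∀ ω, CadlagOn fun t => X t ω) ∧ CadlagOn k ∧ k 0 = 0 ∧
  (∀ t : ℝ, 0 ≤ t → ∀ ω, X t ω = Y t ω + k t) ∧
  (∀ t : ℝ, 0 ≤ t → (∫ ω, h t (X t ω) ∂μ) ∈ Set.Icc (l t) (u t)) ∧
  (∀ t q : ℝ, 0 ≤ t → t ≤ q →
    ((∀ s : ℝ, t < s → s ≤ q → (∫ ω, h s (X s ω) ∂μ) < u s) → 0 ≤ k q - k t) ∧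
    ((∀ s : ℝ, t < s → s ≤ q → l s < ∫ ω, h s (X s ω) ∂μ) → k q - k t ≤ 0)) ∧
  ∀ t : ℝ, 0 < t →
    ((∫ ω, h t (X t ω) ∂μ) < u t → 0 ≤ k t - Function.leftLim k t) ∧
    (l t < ∫ ω, h t (X t ω) ∂μ → k t - Function.leftLim k t ≤ 0)

/-- Solution of the deterministic Skorokhod problem with two time-dependent barriers. -/
def DetSP (y lb ub x k : ℝ → ℝ) : Prop :=
  CadlagOn x ∧ CadlagOn k ∧ k 0 = 0 ∧
  (∀ t : ℝ, 0 ≤ t → x t = y t + k t ∧ x t ∈ Set.Icc (lb t) (ub t)) ∧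
  (∀ t q : ℝ, 0 ≤ t → t ≤ q →
    ((∀ s : ℝ, t < s → s ≤ q → x s < ub s) → 0 ≤ k q - k t) ∧
    ((∀ s : ℝ, t < s → s ≤ q → lb s < x s) → k q - k t ≤ 0)) ∧
  ∀ t : ℝ, 0 < t →
    (x t < ub t → 0 ≤ k t - Function.leftLim k t) ∧
    (lb t < x t → k t - Function.leftLim k t ≤ 0)

/-- Solution of the Skorokhod problem with mean minimality condition and a single
lower barrier `l`.  The minimality condition `∫ (E[h(s,X_s)] - l_s) dk_s = 0` is expressed
through any measure `ν` that agrees with the Lebesgue–Stieltjes measure of `k` on `[0,∞)`. -/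
def MeanSPLower {Ω : Type*} [MeasurableSpace Ω] (μ : Measure Ω) (h : ℝ → ℝ → ℝ)
    (Y : ℝ → Ω → ℝ) (l : ℝ → ℝ) (X : ℝ → Ω → ℝ) (k : ℝ → ℝ) : Prop :=
  (∀ ω, CadlagOn fun t => X t ω) ∧ CadlagOn k ∧ k 0 = 0 ∧
  (∀ t : ℝ, 0 ≤ t → ∀ ω, X t ω = Y t ω + k t) ∧
  (∀ t : ℝ, 0 ≤ t → l t ≤ ∫ ω, h t (X t ω) ∂μ) ∧
  MonotoneOn k (Set.Ici 0) ∧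
  ∀ ν : Measure ℝ,
    (∀ a b : ℝ, 0 ≤ a → a ≤ b → ν (Set.Ioc a b) = ENNReal.ofReal (k b - k a)) →
    ν {0} = 0 →
    ∀ t : ℝ, 0 ≤ t → (∫ s in Set.Icc 0 t, ((∫ ω, h s (X s ω) ∂μ) - l s) ∂ν) = 0

/-- Solution of the Skorokhod problem with mean minimality condition and a single
upper barrier `u`.  The minimality condition `∫ (u_s - E[h(s,X_s)]) d(-k)_s = 0` is expressed
through any measure `ν` that agrees with the Lebesgue–Stieltjes measure of `-k` on `[0,∞)`. -/
def MeanSPUpper {Ω : Type*} [MeasurableSpace Ω] (μ : Measure Ω) (h : ℝ → ℝ → ℝ)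
    (Y : ℝ → Ω → ℝ) (u : ℝ → ℝ) (X : ℝ → Ω → ℝ) (k : ℝ → ℝ) : Prop :=
  (∀ ω, CadlagOn fun t => X t ω) ∧ CadlagOn k ∧ k 0 = 0 ∧
  (∀ t : ℝ, 0 ≤ t → ∀ ω, X t ω = Y t ω + k t) ∧
  (∀ t : ℝ, 0 ≤ t → (∫ ω, h t (X t ω) ∂μ) ≤ u t) ∧
  AntitoneOn k (Set.Ici 0) ∧
  ∀ ν : Measure ℝ,
    (∀ a b : ℝ, 0 ≤ a → a ≤ b → ν (Set.Ioc a b) = ENNReal.ofReal (k a - k b)) →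
    ν {0} = 0 →
    ∀ t : ℝ, 0 ≤ t → (∫ s in Set.Icc 0 t, (u s - ∫ ω, h s (X s ω) ∂μ) ∂ν) = 0

/-- `OscN x η q` is the number of `η`-oscillations of `x` on `[0,q]`: the largest `m`
for which there are `0 ≤ t₁ ≤ t₂ ≤ ⋯ ≤ t_{2m} ≤ q` with `|x(t_{2i}) - x(t_{2i-1})| > η`. -/
def OscN (x : ℝ → ℝ) (η q : ℝ) : ℕ :=
  sSup {m : ℕ | ∃ a b : Fin m → ℝ,
    (∀ i, 0 ≤ a i ∧ a i ≤ b i ∧ b i ≤ q) ∧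
    (∀ i j, i < j → b i ≤ a j) ∧
    ∀ i, η < |x (b i) - x (a i)|}

/-- The left limit at `t` of a càdlàg function on `[0,∞)`, with the convention
`x(0-) = x(0)`. -/
def leftLimAt {E : Type*} [TopologicalSpace E] (x : ℝ → E) (t : ℝ) : E :=
  if t = 0 then x 0 else Function.leftLim x t

/-- Convergence `xₙ → x` in the Skorokhod `J₁` topology on `D([0,∞), E)`, expressed via
the sequence characterization used in the paper. -/
def DConvOn {E : Type*} [TopologicalSpace E] (xs : ℕ → ℝ → E) (x : ℝ → E) : Prop :=
  ∀ t : ℝ, 0 ≤ t → ∃ tn : ℕ → ℝ,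
    (∀ n, 0 ≤ tn n) ∧ Filter.Tendsto tn Filter.atTop (nhds t) ∧
    ∀ t' t'' : ℕ → ℝ, (∀ n, 0 ≤ t' n) → (∀ n, 0 ≤ t'' n) →
      Filter.Tendsto t' Filter.atTop (nhds t) → Filter.Tendsto t'' Filter.atTop (nhds t) →
      (∀ n, t' n < tn n ∧ tn n ≤ t'' n) →
      Filter.Tendsto (fun n => xs n (t' n)) Filter.atTop (nhds (leftLimAt x t)) ∧
      Filter.Tendsto (fun n => xs n (t'' n)) Filter.atTop (nhds (x t))

/-- The one-sided neighbourhood filters that occur in the càdlàg property. -/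
def OneSided (F : Filter ℝ) : Prop :=
  (∃ t : ℝ, 0 ≤ t ∧ F = 𝓝[≥] t) ∨ (∃ t : ℝ, 0 < t ∧ F = 𝓝[<] t)

lemma OneSided.neBot {F : Filter ℝ} (hF : OneSided F) : F.NeBot := by
  rcases hF with ⟨t, -, rfl⟩ | ⟨t, -, rfl⟩ <;> infer_instance

lemma OneSided.cg {F : Filter ℝ} (hF : OneSided F) : F.IsCountablyGenerated := by
  rcases hF with ⟨t, -, rfl⟩ | ⟨t, -, rfl⟩ <;> infer_instance

lemma OneSided.ev {F : Filter ℝ} (hF : OneSided F) :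
    ∃ q : ℝ, 0 ≤ q ∧ ∀ᶠ s in F, s ∈ Icc 0 q := by
  rcases hF with ⟨t, ht, rfl⟩ | ⟨t, ht, rfl⟩
  · refine ⟨t + 1, by linarith, ?_⟩
    filter_upwards [Icc_mem_nhdsGE (show t < t + 1 by linarith)] with s hs
    exact ⟨ht.trans hs.1, hs.2⟩
  · refine ⟨t, ht.le, ?_⟩
    filter_upwards [Ico_mem_nhdsLT ht] with s hs
    exact ⟨hs.1, hs.2.le⟩

lemma OneSided.lim {F : Filter ℝ} (hF : OneSided F) {f : ℝ → ℝ} (hf : CadlagOn f) :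
    ∃ z, Tendsto f F (𝓝 z) := by
  rcases hF with ⟨t, ht, rfl⟩ | ⟨t, ht, rfl⟩
  · exact ⟨_, hf.1 t ht⟩
  · exact hf.2 t ht

lemma OneSided.dist_self {F : Filter ℝ} (hF : OneSided F) :
    Tendsto (fun p : ℝ × ℝ => |p.1 - p.2|) (F ×ˢ F) (𝓝 0) := by
  have : ∃ t, F ≤ 𝓝 t := by
    rcases hF with ⟨t, -, rfl⟩ | ⟨t, -, rfl⟩ <;> exact ⟨t, nhdsWithin_le_nhds⟩
  obtain ⟨t, ht⟩ := this
  have h1 : Tendsto (fun p : ℝ × ℝ => p.1) (F ×ˢ F) (𝓝 t) := tendsto_fst.mono_right ht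
  have h2 : Tendsto (fun p : ℝ × ℝ => p.2) (F ×ˢ F) (𝓝 t) := tendsto_snd.mono_right ht
  simpa using (h1.sub h2).abs

lemma cadlag_dist {f : ℝ → ℝ} (hf : CadlagOn f) {F : Filter ℝ} (hF : OneSided F) :
    Tendsto (fun p : ℝ × ℝ => |f p.1 - f p.2|) (F ×ˢ F) (𝓝 0) := by
  obtain ⟨z, hz⟩ := hF.lim hf
  simpa using ((hz.comp tendsto_fst).sub (hz.comp tendsto_snd)).abs

lemma cadlag_of_dist {f : ℝ → ℝ}
    (hf : ∀ F, OneSided F → Tendsto (fun p : ℝ × ℝ => |f p.1 - f p.2|) (F ×ˢ F) (𝓝 0)) :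
    CadlagOn f := by
  constructor
  · intro t ht
    have h1 := hf _ (Or.inl ⟨t, ht, rfl⟩)
    have h2 : Tendsto (fun r : ℝ => (r, t)) (𝓝[≥] t) (𝓝[≥] t ×ˢ 𝓝[≥] t) :=
      tendsto_id.prodMk (tendsto_const_pure.mono_right (pure_le_nhdsWithin self_mem_Ici))
    have h3 := h1.comp h2
    exact tendsto_iff_dist_tendsto_zero.2 h3
  · intro t ht
    have h1 := hf _ (Or.inr ⟨t, ht, rfl⟩)
    have : Cauchy (map f (𝓝[<] t)) := by
      rw [cauchy_map_iff']
      rw [Metric.uniformity_eq_comap_nhds_zero, tendsto_comap_iff]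
      exact h1
    exact CompleteSpace.complete this

lemma cadlag_add {f g : ℝ → ℝ} (hf : CadlagOn f) (hg : CadlagOn g) :
    CadlagOn (fun t => f t + g t) := by
  refine ⟨fun t ht => (hf.1 t ht).add (hg.1 t ht), fun t ht => ?_⟩
  obtain ⟨a, ha⟩ := hf.2 t ht
  obtain ⟨b, hb⟩ := hg.2 t ht
  exact ⟨_, ha.add hb⟩

lemma cadlag_bdd {f : ℝ → ℝ} (hf : CadlagOn f) (t : ℝ) :
    ∃ C, ∀ s ∈ Icc 0 t, |f s| ≤ C := by
  have key : ∀ F, OneSided F → ∃ C, ∀ᶠ s in F, |f s| ≤ C := by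
    intro F hF
    obtain ⟨z, hz⟩ := hF.lim hf
    refine ⟨|z| + 1, ?_⟩
    exact (hz.abs.eventually_lt_const (by linarith : |z| < |z| + 1)).mono fun s hs => hs.le
  refine isCompact_Icc.induction_on (p := fun s : Set ℝ => ∃ C, ∀ x ∈ s, |f x| ≤ C) ?_ ?_ ?_ ?_
  · exact ⟨0, by simp⟩
  · rintro s u hsu ⟨C, hC⟩
    exact ⟨C, fun x hx => hC x (hsu hx)⟩
  · rintro s u ⟨C, hC⟩ ⟨D, hD⟩
    refine ⟨max C D, fun x hx => ?_⟩
    rcases hx with hx | hx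
    · exact (hC x hx).trans (le_max_left _ _)
    · exact (hD x hx).trans (le_max_right _ _)
  · intro x hx
    obtain ⟨C, hC⟩ := key _ (Or.inl ⟨x, hx.1, rfl⟩)
    rcases hx.1.eq_or_lt with h0 | h0
    · subst h0
      refine ⟨_, nhdsWithin_mono _ Icc_subset_Ici_self hC, C, fun y hy => hy⟩
    · obtain ⟨D, hD⟩ := key _ (Or.inr ⟨x, h0, rfl⟩)
      have : ∀ᶠ s in 𝓝 x, |f s| ≤ max C D := by
        rw [← nhdsLT_sup_nhdsGE, eventually_sup]
        exact ⟨hD.mono fun s hs => hs.trans (le_max_right _ _),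
          hC.mono fun s hs => hs.trans (le_max_left _ _)⟩
      exact ⟨_, nhdsWithin_le_nhds this, max C D, fun y hy => hy⟩

lemma cadlag_aesm {f : ℝ → ℝ} (hf : CadlagOn f) (ν : Measure ℝ) (t : ℝ) :
    AEStronglyMeasurable f (ν.restrict (Icc 0 t)) := by
  have hm : ∀ n : ℕ, Measurable (fun s : ℝ => f (((⌊s * ((n : ℝ) + 1)⌋ : ℝ) + 1) / ((n : ℝ) + 1))) := by
    intro n
    have h1 : Measurable (fun z : ℤ => f (((z : ℝ) + 1) / ((n : ℝ) + 1))) := measurable_from_top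
    exact h1.comp (Int.measurable_floor.comp (measurable_id.mul_const _))
  refine aestronglyMeasurable_of_tendsto_ae atTop (fun n => (hm n).aestronglyMeasurable) ?_
  filter_upwards [ae_restrict_mem measurableSet_Icc] with s hs
  have hlim : Tendsto (fun n : ℕ => ((⌊s * ((n : ℝ) + 1)⌋ : ℝ) + 1) / ((n : ℝ) + 1)) atTop
      (𝓝[≥] s) := by
    have hge : ∀ n : ℕ, s ≤ ((⌊s * ((n : ℝ) + 1)⌋ : ℝ) + 1) / ((n : ℝ) + 1) := by
      intro n
      have : (0 : ℝ) < (n : ℝ) + 1 := by positivity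
      rw [le_div_iff₀ this]
      exact (Int.lt_floor_add_one _).le
    have hle : ∀ n : ℕ, ((⌊s * ((n : ℝ) + 1)⌋ : ℝ) + 1) / ((n : ℝ) + 1) ≤ s + 1 / ((n : ℝ) + 1) := by
      intro n
      have : (0 : ℝ) < (n : ℝ) + 1 := by positivity
      rw [div_le_iff₀ this, add_mul, one_div_mul_cancel this.ne']
      linarith [Int.floor_le (s * ((n : ℝ) + 1))]
    refine tendsto_nhdsWithin_iff.2 ⟨?_, Eventually.of_forall hge⟩
    refine tendsto_of_tendsto_of_tendsto_of_le_of_le tendsto_const_nhds ?_ hge hle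
    simpa using tendsto_const_nhds.add (tendsto_one_div_add_atTop_nhds_zero_nat (𝕜 := ℝ))
  exact (hf.1 s hs.1).tendsto.comp hlim

lemma cadlag_integrableOn {f : ℝ → ℝ} (hf : CadlagOn f) (ν : Measure ℝ) (t : ℝ)
    (hν : ν (Icc 0 t) < ⊤) : IntegrableOn f (Icc 0 t) ν := by
  obtain ⟨C, hC⟩ := cadlag_bdd hf t
  refine IntegrableOn.of_bound hν (cadlag_aesm hf ν t) C ?_
  filter_upwards [ae_restrict_mem measurableSet_Icc] with s hs
  exact hC s hs

/-- Vitali: a nice process is Cauchy in mean along one-sided filters. -/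
lemma NiceProcess.dist {Ω : Type*} [MeasurableSpace Ω] {μ : Measure Ω} [IsProbabilityMeasure μ]
    {Y : ℝ → Ω → ℝ} (hY : NiceProcess μ Y) {F : Filter ℝ} (hF : OneSided F) :
    Tendsto (fun p : ℝ × ℝ => ∫ ω, |Y p.1 ω - Y p.2 ω| ∂μ) (F ×ˢ F) (𝓝 0) := by
  obtain ⟨q, hq, hev⟩ := hF.ev
  have := hF.cg
  refine tendsto_of_seq_tendsto fun x hx => ?_
  have h1 : Tendsto (fun n => (x n).1) atTop F := tendsto_fst.comp hx
  have h2 : Tendsto (fun n => (x n).2) atTop F := tendsto_snd.comp hx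
  let a : ℕ → Icc (0:ℝ) q := fun n => projIcc 0 q hq (x n).1
  let b : ℕ → Icc (0:ℝ) q := fun n => projIcc 0 q hq (x n).2
  have ha : ∀ᶠ n in atTop, ((a n : Icc (0:ℝ) q) : ℝ) = (x n).1 := by
    filter_upwards [h1.eventually hev] with n hn
    simp only [a]
    rw [projIcc_of_mem hq hn]
  have hb : ∀ᶠ n in atTop, ((b n : Icc (0:ℝ) q) : ℝ) = (x n).2 := by
    filter_upwards [h2.eventually hev] with n hn
    simp only [b]
    rw [projIcc_of_mem hq hn]
  have hU := hY.unifInt q hq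
  have hUa : UnifIntegrable (fun n => Y (a n)) 1 μ := by
    intro ε hε
    obtain ⟨δ, hδ, H⟩ := hU.2.1 hε
    exact ⟨δ, hδ, fun i s hs hμ => H (a i) s hs hμ⟩
  have hUb : UnifIntegrable (fun n => Y (b n)) 1 μ := by
    intro ε hε
    obtain ⟨δ, hδ, H⟩ := hU.2.1 hε
    exact ⟨δ, hδ, fun i s hs hμ => H (b i) s hs hμ⟩
  have hma : ∀ n, AEStronglyMeasurable (Y (a n)) μ := fun n => hU.1 (a n)
  have hmb : ∀ n, AEStronglyMeasurable (Y (b n)) μ := fun n => hU.1 (b n)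
  have hUd := hUa.sub hUb le_rfl hma hmb
  have hlim := tendsto_Lp_finite_of_tendsto_ae (μ := μ) (g := fun _ => (0:ℝ)) le_rfl
    ENNReal.one_ne_top (fun n => (hma n).sub (hmb n)) (MemLp.zero' ) hUd (by
      refine Eventually.of_forall fun ω => ?_
      obtain ⟨z, hz⟩ := hF.lim (hY.cadlag ω)
      have h3 := (hz.comp h1).sub (hz.comp h2)
      rw [sub_self] at h3
      refine h3.congr' ?_
      filter_upwards [ha, hb] with n hn hn'
      simp [hn, hn'])
  have hlim' := (ENNReal.tendsto_toReal ENNReal.zero_ne_top).comp hlim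
  refine hlim'.congr' ?_
  filter_upwards [ha, hb] with n hn hn'
  simp only [Function.comp]
  rw [eLpNorm_one_eq_lintegral_enorm, integral_eq_lintegral_of_nonneg_ae
    (Eventually.of_forall fun _ => abs_nonneg _)]
  · congr 1
    refine lintegral_congr fun ω => ?_
    simp only [Pi.sub_apply, sub_zero, hn, hn']
    rw [Real.enorm_eq_ofReal_abs]
  · have := ((hma n).sub (hmb n)).norm
    rw [hn, hn'] at this
    exact this

/-- The candidate reflection term. -/
def KK (L : ℝ → ℝ) (t : ℝ) : ℝ := sSup ((fun s => max (L s) 0) '' Icc 0 t)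

lemma KK_bdd {L : ℝ → ℝ} (hL : CadlagOn L) (t : ℝ) :
    BddAbove ((fun s => max (L s) 0) '' Icc 0 t) := by
  obtain ⟨C, hC⟩ := cadlag_bdd hL t
  refine ⟨max C 0, ?_⟩
  rintro _ ⟨s, hs, rfl⟩
  exact max_le_max ((le_abs_self _).trans (hC s hs)) le_rfl

lemma KK_nonneg (L : ℝ → ℝ) (t : ℝ) : 0 ≤ KK L t := by
  apply Real.sSup_nonneg
  rintro _ ⟨s, hs, rfl⟩
  exact le_max_right _ _

lemma le_KK {L : ℝ → ℝ} (hL : CadlagOn L) {s t : ℝ} (hs : 0 ≤ s) (hst : s ≤ t) :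
    max (L s) 0 ≤ KK L t :=
  le_csSup (KK_bdd hL t) ⟨s, ⟨hs, hst⟩, rfl⟩

lemma KK_le {L : ℝ → ℝ} {t c : ℝ} (hc : 0 ≤ c) (H : ∀ s, 0 ≤ s → s ≤ t → L s ≤ c) :
    KK L t ≤ c := by
  apply Real.sSup_le _ hc
  rintro _ ⟨s, hs, rfl⟩
  exact max_le (H s hs.1 hs.2) hc

lemma KK_mono {L : ℝ → ℝ} (hL : CadlagOn L) : Monotone (KK L) := fun s t hst =>
  KK_le (KK_nonneg L t) fun r hr hrs => (le_max_left _ _).trans (le_KK hL hr (hrs.trans hst))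

lemma KK_zero {L : ℝ → ℝ} (h0 : L 0 ≤ 0) : KK L 0 = 0 :=
  le_antisymm (KK_le le_rfl fun s hs hs' => by
    obtain rfl := le_antisymm hs' hs
    exact h0) (KK_nonneg L 0)

/-- If `L` stays below `c ≥ KK L s` right after `s` then so does `KK L`. -/
lemma KK_right {L : ℝ → ℝ} (hL : CadlagOn L) {s c : ℝ} (hs : 0 ≤ s) (hc : KK L s ≤ c)
    (hLc : L s < c) : ∃ q, s < q ∧ ∀ r, s ≤ r → r < q → KK L r ≤ c := by
  have h1 : ∀ᶠ r in 𝓝[≥] s, L r < c := (hL.1 s hs).tendsto.eventually_lt_const hLc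
  obtain ⟨q, hq, hsub⟩ := mem_nhdsGE_iff_exists_Ico_subset.1 h1
  refine ⟨q, hq, fun r hr hrq => KK_le ((KK_nonneg L s).trans hc) fun u hu hur => ?_⟩
  rcases le_or_gt u s with h | h
  · exact (le_max_left _ _).trans ((le_KK hL hu h).trans hc)
  · exact le_of_lt (hsub ⟨h.le, hur.trans_lt hrq⟩)

lemma KK_cadlag {L : ℝ → ℝ} (hL : CadlagOn L) : CadlagOn (KK L) := by
  constructor
  · intro t ht
    refine tendsto_order.2 ⟨fun a ha => ?_, fun a ha => ?_⟩
    · filter_upwards [self_mem_nhdsWithin] with r hr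
      exact ha.trans_le (KK_mono hL hr)
    · obtain ⟨c, hc1, hc2⟩ := exists_between ha
      obtain ⟨q, hq, H⟩ := KK_right hL ht hc1.le
        (((le_max_left _ _).trans (le_KK hL ht le_rfl)).trans_lt hc1)
      filter_upwards [Ico_mem_nhdsGE hq] with r hr
      exact (H r hr.1 hr.2).trans_lt hc2
  · intro t _
    exact ⟨_, (KK_mono hL).tendsto_leftLim t⟩

lemma KK_null {L : ℝ → ℝ} (hL : CadlagOn L) (ν : Measure ℝ)
    (hν : ∀ a b : ℝ, 0 ≤ a → a ≤ b → ν (Ioc a b) = ENNReal.ofReal (KK L b - KK L a))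
    (hν0 : ν {0} = 0) : ν {s | 0 ≤ s ∧ L s < KK L s} = 0 := by
  have hsing : ∀ s, 0 ≤ s → L s < KK L s → ν {s} = 0 := by
    intro s hs hlt
    rcases hs.eq_or_lt with h0 | h0
    · rw [← h0]; exact hν0
    have key : ∀ ε : ℝ, 0 < ε → ∃ r, 0 ≤ r ∧ r < s ∧ KK L s - ε ≤ KK L r := by
      intro ε hε
      rcases (le_KK hL hs le_rfl).eq_or_lt with h1 | h1
      · refine ⟨0, le_rfl, h0, ?_⟩
        have : KK L s = 0 := by
          rcases max_choice (L s) 0 with h2 | h2 <;> linarith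
        have := KK_nonneg L 0
        linarith
      · have hm : max (KK L s - ε) (max (L s) 0) < KK L s := max_lt (by linarith) h1
        obtain ⟨_, ⟨r, hr, rfl⟩, hr2⟩ := exists_lt_of_lt_csSup
          (s := (fun s => max (L s) 0) '' Icc 0 s) ⟨_, 0, ⟨le_rfl, hs⟩, rfl⟩ hm
        have hne : r ≠ s := by
          rintro rfl
          exact absurd hr2 (not_lt.2 (le_max_right _ _))
        refine ⟨r, hr.1, lt_of_le_of_ne hr.2 hne, ?_⟩
        exact (le_max_left _ _).trans (hr2.le.trans (le_KK hL hr.1 le_rfl))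
    refine le_antisymm (ENNReal.le_of_forall_pos_le_add fun ε hε _ => ?_) bot_le
    obtain ⟨r, hr0, hrs, hr⟩ := key ε hε
    calc ν {s} ≤ ν (Ioc r s) := measure_mono (by simpa using hrs)
      _ = ENNReal.ofReal (KK L s - KK L r) := hν r s hr0 hrs.le
      _ ≤ ENNReal.ofReal ε := ENNReal.ofReal_le_ofReal (by linarith)
      _ = 0 + ε := by simp
  let A : ℚ → Set ℝ := fun q => {s | 0 ≤ s ∧ L s < KK L s ∧ s < q ∧ KK L s = KK L q}
  have hsub : {s | 0 ≤ s ∧ L s < KK L s} ⊆ ⋃ q, A q := by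
    rintro s ⟨hs, hlt⟩
    obtain ⟨q, hq, H⟩ := KK_right hL hs le_rfl hlt
    obtain ⟨p, hp1, hp2⟩ := exists_rat_btwn hq
    exact mem_iUnion.2 ⟨p, hs, hlt, hp1, le_antisymm (KK_mono hL hp1.le) (H p hp1.le hp2)⟩
  refine measure_mono_null hsub (measure_iUnion_null fun q => ?_)
  have hIoc : ∀ s ∈ A q, ν (Ioc s q) = 0 := by
    intro s hs
    rw [hν s q hs.1 hs.2.2.1.le, hs.2.2.2]
    simp
  refine measure_null_of_locally_null _ fun x hx => ?_
  by_cases hmin : ∃ s ∈ A q, s < x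
  · obtain ⟨s, hs, hsx⟩ := hmin
    refine ⟨A q ∩ Ioi s, inter_mem self_mem_nhdsWithin
      (nhdsWithin_le_nhds (Ioi_mem_nhds hsx)), ?_⟩
    have hss : A q ∩ Ioi s ⊆ Ioc s q := fun y hy => ⟨hy.2, hy.1.2.2.1.le⟩
    exact measure_mono_null hss (hIoc s hs)
  · push Not at hmin
    refine ⟨A q, self_mem_nhdsWithin, ?_⟩
    refine measure_mono_null (t := {x} ∪ Ioc x q) (fun y hy => ?_)
      (measure_union_null (hsing x hx.1 hx.2.1) (hIoc x hx))
    rcases (hmin y hy).eq_or_lt with h | h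
    · exact Or.inl h.symm
    · exact Or.inr ⟨h, hy.2.2.1.le⟩

/-- Deterministic uniqueness. -/
lemma KK_unique {L k g : ℝ → ℝ} (hL : CadlagOn L) (hk : CadlagOn k) (hk0 : k 0 = 0)
    (hkm : MonotoneOn k (Ici 0)) (hLk : ∀ t, 0 ≤ t → L t ≤ k t) (hg : CadlagOn g)
    (hg0 : ∀ t, 0 ≤ t → 0 ≤ g t) (hgp : ∀ t, 0 ≤ t → L t < k t → 0 < g t)
    (hmin : ∀ ν : Measure ℝ,
      (∀ a b : ℝ, 0 ≤ a → a ≤ b → ν (Ioc a b) = ENNReal.ofReal (k b - k a)) →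
      ν {0} = 0 → ∀ t : ℝ, 0 ≤ t → (∫ s in Icc 0 t, g s ∂ν) = 0)
    (t : ℝ) (ht : 0 ≤ t) : k t = KK L t := by
  have hknn : ∀ s, 0 ≤ s → 0 ≤ k s := fun s hs => hk0 ▸ hkm self_mem_Ici hs hs
  refine le_antisymm ?_ (KK_le (hknn t ht) fun s hs hst =>
    (hLk s hs).trans (hkm hs ht hst))
  by_contra! hlt
  -- the Stieltjes function
  let f : StieltjesFunction ℝ :=
    { toFun := fun s => k (max s 0)
      mono' := fun a b hab => hkm (le_max_right a 0) (le_max_right b 0) (max_le_max hab le_rfl)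
      right_continuous' := fun x => by
        have h1 := hk.1 (max x 0) (le_max_right _ _)
        refine ContinuousWithinAt.comp (t := Ici (max x 0)) h1
          (continuous_id.max continuous_const).continuousWithinAt ?_
        intro y hy
        exact max_le_max (mem_Ici.1 hy) (le_refl (0:ℝ)) }
  have hf : ∀ s, 0 ≤ s → f s = k s := fun s hs => by
    change k (max s 0) = k s
    rw [max_eq_left hs]
  let ν := f.measure
  have hIoc : ∀ a b : ℝ, 0 ≤ a → a ≤ b → ν (Ioc a b) = ENNReal.ofReal (k b - k a) := by
    intro a b ha hab
    simp only [ν]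
    rw [f.measure_Ioc, hf a ha, hf b (ha.trans hab)]
  have hz : ν {0} = 0 := by
    simp only [ν]
    rw [f.measure_singleton]
    have : k 0 ≤ leftLim f 0 := by
      have h1 := f.mono.le_leftLim (show (-1:ℝ) < 0 by norm_num)
      have h2 : f (-1) = k 0 := by
        change k (max (-1) 0) = k 0
        norm_num
      rwa [h2] at h1
    rw [hf 0 le_rfl]
    exact ENNReal.ofReal_eq_zero.2 (by linarith)
  have hint := hmin ν hIoc hz t ht
  have hfin : ν (Icc 0 t) < ⊤ := by
    simp only [ν]
    exact isCompact_Icc.measure_lt_top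
  have hae : ∀ᵐ s ∂(ν.restrict (Icc 0 t)), g s = 0 := by
    have h1 : 0 ≤ᵐ[ν.restrict (Icc 0 t)] g := by
      filter_upwards [ae_restrict_mem measurableSet_Icc] with s hs using hg0 s hs.1
    exact (integral_eq_zero_iff_of_nonneg_ae h1 (cadlag_integrableOn hg ν t hfin)).1 hint
  rw [ae_restrict_iff' measurableSet_Icc] at hae
  set c := KK L t with hc
  have hB : ν {s | s ∈ Icc 0 t ∧ c < k s} = 0 := by
    refine measure_mono_null ?_ (ae_iff.1 hae)
    rintro s ⟨hs, hcs⟩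
    have h1 : L s < k s := ((le_max_left _ _).trans (le_KK hL hs.1 hs.2)).trans_lt hcs
    exact fun hh => (hgp s hs.1 h1).ne' (hh hs)
  let S : Set ℝ := {s | s ∈ Icc 0 t ∧ k s ≤ c}
  have hS0 : (0:ℝ) ∈ S := ⟨⟨le_rfl, ht⟩, hk0.le.trans (KK_nonneg L t)⟩
  have hSb : BddAbove S := ⟨t, fun s hs => hs.1.2⟩
  set τ := sSup S with hτ
  have hτ0 : 0 ≤ τ := le_csSup hSb hS0
  have hτt : τ ≤ t := csSup_le ⟨0, hS0⟩ fun s hs => hs.1.2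
  rcases le_or_gt (k τ) c with hcase | hcase
  · have h1 : ν (Ioc τ t) = 0 := by
      refine measure_mono_null ?_ hB
      intro s hs
      have hs1 : s ∈ Icc 0 t := ⟨hτ0.trans hs.1.le, hs.2⟩
      refine ⟨hs1, ?_⟩
      by_contra! hcon
      exact absurd (le_csSup hSb (show s ∈ S from ⟨hs1, hcon⟩)) (not_le.2 hs.1)
    rw [hIoc τ t hτ0 hτt, ENNReal.ofReal_eq_zero] at h1
    linarith
  · have h1 : ν {τ} = 0 := by
      refine measure_mono_null ?_ hB
      rintro _ rfl
      exact ⟨⟨hτ0, hτt⟩, hcase⟩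
    simp only [ν] at h1
    rw [f.measure_singleton, hf τ hτ0, ENNReal.ofReal_eq_zero] at h1
    have h2 : leftLim f τ ≤ c := by
      refine le_of_tendsto (f.mono.tendsto_leftLim τ) ?_
      filter_upwards [self_mem_nhdsWithin] with r hr
      obtain ⟨s, hs, hrs⟩ := exists_lt_of_lt_csSup ⟨0, hS0⟩ (show r < sSup S from hr)
      calc f r ≤ f s := f.mono hrs.le
        _ = k s := hf s hs.1.1
        _ ≤ c := hs.2
    linarith

section FF
variable {Ω : Type*} [MeasurableSpace Ω] {μ : Measure Ω} [IsProbabilityMeasure μ]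
  {h : ℝ → ℝ → ℝ} {Mh Lh ch Ch : ℝ} {Y : ℝ → Ω → ℝ}

lemma hY_int (hH : CondH h Mh Lh ch Ch) (hY : NiceProcess μ Y) {r s : ℝ} (hr : 0 ≤ r)
    (hs : 0 ≤ s) (a : ℝ) : Integrable (fun ω => h r (Y s ω + a)) μ := by
  have h1 : Integrable (fun ω => Mh * (1 + |Y s ω + a|)) μ :=
    ((integrable_const (1:ℝ)).add (((hY.integrable s hs).add (integrable_const a)).abs)).const_mul Mh
  have h2 : Measurable (h r) := hH.meas.of_uncurry_left
  refine h1.mono' ?_ (Eventually.of_forall fun ω => hH.growth r _ hr)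
  exact (h2.comp_aemeasurable
    ((hY.integrable s hs).aemeasurable.add_const a)).aestronglyMeasurable

lemma F_lower (hH : CondH h Mh Lh ch Ch) (hY : NiceProcess μ Y) {s : ℝ} (hs : 0 ≤ s)
    {a b : ℝ} (hab : b ≤ a) :
    ch * (a - b) ≤ (∫ ω, h s (Y s ω + a) ∂μ) - ∫ ω, h s (Y s ω + b) ∂μ := by
  rw [← integral_sub (hY_int hH hY hs hs a) (hY_int hH hY hs hs b)]
  have : ch * (a - b) = ∫ _ω, ch * (a - b) ∂μ := by simp
  rw [this]
  refine integral_mono (integrable_const _) ((hY_int hH hY hs hs a).sub (hY_int hH hY hs hs b)) ?_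
  intro ω
  have h1 := hH.lip_lower s (Y s ω + a) (Y s ω + b) hs
  have h2 := (hH.strict_mono s hs).monotone (show Y s ω + b ≤ Y s ω + a by linarith)
  rw [abs_of_nonneg (by linarith), abs_of_nonneg (by linarith)] at h1
  simp only
  linarith

lemma F_diff (hH : CondH h Mh Lh ch Ch) (hY : NiceProcess μ Y) {r s : ℝ} (hr : 0 ≤ r)
    (hs : 0 ≤ s) (a b : ℝ) :
    |(∫ ω, h r (Y r ω + a) ∂μ) - ∫ ω, h s (Y s ω + b) ∂μ| ≤
      Lh * |r - s| + Ch * ((∫ ω, |Y r ω - Y s ω| ∂μ) + |a - b|) := by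
  rw [← integral_sub (hY_int hH hY hr hr a) (hY_int hH hY hs hs b)]
  have hi : Integrable (fun ω => |Y r ω - Y s ω|) μ :=
    ((hY.integrable r hr).sub (hY.integrable s hs)).abs
  have e : Lh * |r - s| + Ch * ((∫ ω, |Y r ω - Y s ω| ∂μ) + |a - b|) =
      ∫ ω, (Lh * |r - s| + Ch * (|Y r ω - Y s ω| + |a - b|)) ∂μ := by
    have hi2 : Integrable (fun ω => |Y r ω - Y s ω| + |a - b|) μ := hi.add (integrable_const _)
    rw [integral_add (integrable_const _) (hi2.const_mul _),
      integral_const_mul Ch, integral_add hi (integrable_const _)]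
    simp
  rw [e]
  refine abs_integral_le_integral_abs.trans ?_
  refine integral_mono ((hY_int hH hY hr hr a).sub (hY_int hH hY hs hs b)).abs
    ((integrable_const _).add ((hi.add (integrable_const _)).const_mul _)) ?_
  intro ω
  have h1 := hH.lip_time s r (Y r ω + a) hs hr
  have h2 := hH.lip_upper s (Y r ω + a) (Y s ω + b) hs
  have h3 : |Y r ω + a - (Y s ω + b)| ≤ |Y r ω - Y s ω| + |a - b| := by
    have := abs_add_le (Y r ω - Y s ω) (a - b)
    calc _ = |Y r ω - Y s ω + (a - b)| := by ring_nf
      _ ≤ _ := this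
  have h4 := abs_sub_le (h r (Y r ω + a)) (h s (Y r ω + a)) (h s (Y s ω + b))
  have h5 := mul_le_mul_of_nonneg_left h3 hH.Ch_pos.le
  simp only
  linarith

lemma F_bound_tendsto (hY : NiceProcess μ Y) (Lh Ch : ℝ) {k l : ℝ → ℝ} (hk : CadlagOn k)
    (hl : CadlagOn l) {F : Filter ℝ} (hF : OneSided F) :
    Tendsto (fun p : ℝ × ℝ => |l p.1 - l p.2| + (Lh * |p.1 - p.2| +
      Ch * ((∫ ω, |Y p.1 ω - Y p.2 ω| ∂μ) + |k p.1 - k p.2|))) (F ×ˢ F) (𝓝 0) := by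
  have h1 := (cadlag_dist hl hF).add ((hF.dist_self.const_mul Lh).add
    (((hY.dist hF).add (cadlag_dist hk hF)).const_mul Ch))
  simpa using h1

lemma OneSided.ev_prod {F : Filter ℝ} (hF : OneSided F) :
    ∀ᶠ p : ℝ × ℝ in F ×ˢ F, 0 ≤ p.1 ∧ 0 ≤ p.2 := by
  obtain ⟨q, -, hq⟩ := hF.ev
  exact (hq.prod_mk hq).mono fun p hp => ⟨hp.1.1, hp.2.1⟩

lemma g_cadlag (hH : CondH h Mh Lh ch Ch) (hY : NiceProcess μ Y) {k l : ℝ → ℝ}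
    (hk : CadlagOn k) (hl : CadlagOn l) :
    CadlagOn (fun s => (∫ ω, h s (Y s ω + k s) ∂μ) - l s) := by
  refine cadlag_of_dist fun F hF => ?_
  refine squeeze_zero' (Eventually.of_forall fun _ => abs_nonneg _) ?_
    (F_bound_tendsto hY Lh Ch hk hl hF)
  filter_upwards [hF.ev_prod] with p hp
  have h1 := F_diff hH hY hp.1 hp.2 (k p.1) (k p.2)
  have h2 := abs_sub ((∫ ω, h p.1 (Y p.1 ω + k p.1) ∂μ) - ∫ ω, h p.2 (Y p.2 ω + k p.2) ∂μ)
    (l p.1 - l p.2)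
  rw [sub_sub_sub_comm]
  linarith

lemma L_cadlag (hH : CondH h Mh Lh ch Ch) (hY : NiceProcess μ Y) {L l : ℝ → ℝ}
    (hl : CadlagOn l) (hL : ∀ s, 0 ≤ s → (∫ ω, h s (Y s ω + L s) ∂μ) = l s) :
    CadlagOn L := by
  refine cadlag_of_dist fun F hF => ?_
  have hc : CadlagOn (fun _ : ℝ => (0:ℝ)) :=
    ⟨fun _ _ => continuousWithinAt_const, fun _ _ => ⟨0, tendsto_const_nhds⟩⟩
  have hb := (F_bound_tendsto hY Lh Ch hc hl hF).div_const ch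
  rw [zero_div] at hb
  refine squeeze_zero' (Eventually.of_forall fun _ => abs_nonneg _) ?_ hb
  filter_upwards [hF.ev_prod] with p hp
  rw [le_div_iff₀ hH.ch_pos]
  have h1 := F_diff hH hY hp.1 hp.2 (L p.2) (L p.2)
  have h2 : |L p.1 - L p.2| * ch ≤
      |(∫ ω, h p.1 (Y p.1 ω + L p.1) ∂μ) - ∫ ω, h p.1 (Y p.1 ω + L p.2) ∂μ| := by
    rcases le_total (L p.2) (L p.1) with h3 | h3
    · rw [abs_of_nonneg (sub_nonneg.2 h3), mul_comm]
      exact (F_lower hH hY hp.1 h3).trans (le_abs_self _)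
    · rw [abs_sub_comm, abs_of_nonneg (sub_nonneg.2 h3), mul_comm, abs_sub_comm]
      exact (F_lower hH hY hp.1 h3).trans (le_abs_self _)
  rw [hL _ hp.2] at h1
  rw [hL _ hp.1] at h2
  have h3 := abs_sub_le (l p.1) (l p.2) (∫ ω, h p.1 (Y p.1 ω + L p.2) ∂μ)
  rw [abs_sub_comm (l p.2)] at h3
  simp only [sub_self] at h1 ⊢
  linarith

end FF

/-- existence, uniqueness and explicit formula for the Skorokhod problem
with mean minimality condition and a single lower barrier. -/
theorem stmt_12 {Ω : Type*} [MeasurableSpace Ω] (μ : Measure Ω) [IsProbabilityMeasure μ]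
    (h : ℝ → ℝ → ℝ) (Mh Lh ch Ch : ℝ) (hH : CondH h Mh Lh ch Ch)
    (Y : ℝ → Ω → ℝ) (hY : NiceProcess μ Y)
    (l : ℝ → ℝ) (hl : CadlagOn l) (h0 : l 0 ≤ ∫ ω, h 0 (Y 0 ω) ∂μ)
    (lbar : ℝ → ℝ)
    (hlbar : ∀ s : ℝ, 0 ≤ s → (∫ ω, h s (Y s ω - (∫ ω', Y s ω' ∂μ) + lbar s) ∂μ) = l s) :
    (∃ (X : ℝ → Ω → ℝ) (k : ℝ → ℝ), MeanSPLower μ h Y l X k) ∧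
    (∀ (X X' : ℝ → Ω → ℝ) (k k' : ℝ → ℝ),
      MeanSPLower μ h Y l X k → MeanSPLower μ h Y l X' k' →
      ∀ t : ℝ, 0 ≤ t → k t = k' t ∧ ∀ ω, X t ω = X' t ω) ∧
    (∀ (X : ℝ → Ω → ℝ) (k : ℝ → ℝ), MeanSPLower μ h Y l X k →
      ∀ t : ℝ, 0 ≤ t →
        k t = sSup ((fun s => max (lbar s - ∫ ω, Y s ω ∂μ) 0) '' Set.Icc 0 t)) := by
  let L : ℝ → ℝ := fun s => lbar s - ∫ ω, Y s ω ∂μ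
  have hLeq : ∀ s, 0 ≤ s → (∫ ω, h s (Y s ω + L s) ∂μ) = l s := by
    intro s hs
    rw [← hlbar s hs]
    refine integral_congr_ae (Eventually.of_forall fun ω => ?_)
    simp only [L]
    congr 1
    ring
  have hL : CadlagOn L := L_cadlag hH hY hl hLeq
  have hcmp : ∀ s, 0 ≤ s → ∀ a, l s ≤ (∫ ω, h s (Y s ω + a) ∂μ) → L s ≤ a := by
    intro s hs a ha
    by_contra! hcon
    have h1 := F_lower hH hY hs hcon.le
    rw [hLeq s hs] at h1
    have h2 := mul_pos hH.ch_pos (sub_pos.2 hcon)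
    linarith
  have hL0 : L 0 ≤ 0 := hcmp 0 le_rfl 0 (by simpa using h0)
  have hform : ∀ (X : ℝ → Ω → ℝ) (k : ℝ → ℝ), MeanSPLower μ h Y l X k →
      ∀ t : ℝ, 0 ≤ t → k t = KK L t := by
    rintro X k ⟨-, hk, hk0, hX, hcon, hkm, hmin⟩ t ht
    have hXe : ∀ s, 0 ≤ s → (∫ ω, h s (X s ω) ∂μ) = ∫ ω, h s (Y s ω + k s) ∂μ := by
      intro s hs
      refine integral_congr_ae (Eventually.of_forall fun ω => ?_)
      simp only [hX s hs ω]
    have hcon' : ∀ s, 0 ≤ s → l s ≤ ∫ ω, h s (Y s ω + k s) ∂μ := fun s hs =>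
      hXe s hs ▸ hcon s hs
    refine KK_unique (g := fun s => (∫ ω, h s (Y s ω + k s) ∂μ) - l s) hL hk hk0 hkm
      (fun s hs => hcmp s hs _ (hcon' s hs)) (g_cadlag hH hY hk hl)
      (fun s hs => sub_nonneg.2 (hcon' s hs)) ?_ ?_ t ht
    · intro s hs hlt
      have h1 := F_lower hH hY hs hlt.le
      rw [hLeq s hs] at h1
      exact (mul_pos hH.ch_pos (sub_pos.2 hlt)).trans_le h1
    · intro ν h1 h2 u hu
      refine Eq.trans ?_ (hmin ν h1 h2 u hu)
      refine setIntegral_congr_fun (measurableSet_Icc (a := (0:ℝ)) (b := u)) fun s hs => ?_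
      simp only [hXe s hs.1]
  refine ⟨⟨fun t ω => Y t ω + KK L t, KK L, fun ω => cadlag_add (hY.cadlag ω) (KK_cadlag hL),
    KK_cadlag hL, KK_zero hL0, fun t _ ω => rfl, ?_, (KK_mono hL).monotoneOn _, ?_⟩, ?_, hform⟩
  · intro t ht
    have h1 : L t ≤ KK L t := (le_max_left _ _).trans (le_KK hL ht le_rfl)
    have h2 := F_lower hH hY ht h1
    rw [hLeq t ht] at h2
    have h3 := mul_nonneg hH.ch_pos.le (sub_nonneg.2 h1)
    linarith
  · intro ν h1 h2 t ht
    refine integral_eq_zero_of_ae ?_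
    have h3 := KK_null hL ν h1 h2
    rw [EventuallyEq, ae_restrict_iff' (measurableSet_Icc (a := (0:ℝ)) (b := t))]
    filter_upwards [measure_eq_zero_iff_ae_notMem.1 h3] with s hs hs'
    have h4 : L s ≤ KK L s := (le_max_left _ _).trans (le_KK hL hs'.1 le_rfl)
    have h5 : KK L s = L s := by
      by_contra hne
      exact hs ⟨hs'.1, lt_of_le_of_ne h4 (Ne.symm hne)⟩
    simp only [h5, hLeq s hs'.1, sub_self, Pi.zero_apply]
  · intro X X' k k' hs hs' t ht
    have h1 : k t = k' t := by rw [hform X k hs t ht, hform X' k' hs' t ht]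
    refine ⟨h1, fun ω => ?_⟩
    rw [hs.2.2.2.1 t ht ω, hs'.2.2.2.1 t ht ω, h1]
end
end

section
/- Let (X, k) be the unique solution of the Skorokhod problem with mean minimality condition and two constraints associated with (h, Y, l, u). For each n ≥ 1 define the grid values k^n_{j/n} recursively by k^n_0 = 0 and k^n_{(j+1)/n} = max( min( k^n_{j/n}, ū_{(j+1)/n} − E[Y_{(j+1)/n}] ), l̄_{(j+1)/n} − E[Y_{(j+1)/n}] ) for j ≥ 0, and set X^n_{j/n} = Y_{j/n} + k^n_{j/n}. Then for every q ≥ 0, max_{j : j/n ≤ q} |k^n_{j/n} − k_{j/n}| → 0 as n → ∞; consequently max_{j : j/n ≤ q} ( |X^n_{j/n} − X_{j/n}| + |k^n_{j/n} − k_{j/n}| ) → 0 almost surely. -/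
open MeasureTheory Filter Set Function Topology

noncomputable section

lemma aux_step_upper (a b k : ℝ → ℝ) (hk : CadlagOn k)
    (hab : ∀ t : ℝ, 0 ≤ t → a t ≤ k t ∧ k t ≤ b t)
    (hup : ∀ t q : ℝ, 0 ≤ t → t ≤ q → (∀ s, t < s → s ≤ q → k s < b s) → k t ≤ k q)
    (hju : ∀ t : ℝ, 0 < t → ∀ L, Tendsto k (𝓝[<] t) (𝓝 L) → k t < b t → L ≤ k t)
    (s t ε x : ℝ) (hs : 0 ≤ s) (hst : s < t) (hε : 0 ≤ ε)
    (hosc : ∀ r, s < r → r ≤ t → |b r - b t| ≤ ε) :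
    max (min x (b t)) (a t) - k t ≤ max (x - k s) ε := by
  by_contra hcon
  push Not at hcon
  obtain ⟨h1, h2⟩ := max_lt_iff.1 hcon
  have hat := (hab t (hs.trans hst.le)).1
  have h3 : a t < min x (b t) := by
    by_contra h
    push Not at h
    rw [max_eq_right h] at h2
    linarith
  rw [max_eq_left h3.le] at h1 h2
  have hx := min_le_left x (b t)
  have hb := min_le_right x (b t)
  by_cases hc : ∀ r, s < r → r ≤ t → k r < b r
  · have := hup s t hs hst.le hc
    linarith
  · push Not at hc
    obtain ⟨r0, hr0s, hr0t, hr0⟩ := hc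
    set A : Set ℝ := {r | s < r ∧ r ≤ t ∧ b r ≤ k r} with hA
    have hne : A.Nonempty := ⟨r0, hr0s, hr0t, hr0⟩
    have hbd : BddAbove A := ⟨t, fun r hr => hr.2.1⟩
    set R := sSup A with hR
    have hsR : s < R := lt_of_lt_of_le hr0s (le_csSup hbd ⟨hr0s, hr0t, hr0⟩)
    have hRt : R ≤ t := csSup_le hne fun r hr => hr.2.1
    have hlow : b t - ε ≤ k R := by
      by_cases hRA : R ∈ A
      · have := abs_le.1 (hosc R hsR hRt)
        have := hRA.2.2
        linarith
      · have hlt : k R < b R := by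
          by_contra h
          push Not at h
          exact hRA ⟨hsR, hRt, h⟩
        have hRpos : 0 < R := lt_of_le_of_lt hs hsR
        obtain ⟨L, hL⟩ := hk.2 R hRpos
        have hLk := hju R hRpos L hL hlt
        refine le_trans ?_ hLk
        by_contra h
        push Not at h
        have hev := hL.eventually (gt_mem_nhds h)
        obtain ⟨c, hcR, hc⟩ := (mem_nhdsLT_iff_exists_Ioo_subset).1 hev
        obtain ⟨r, hrA, hcr⟩ := exists_lt_of_lt_csSup hne hcR
        have hrR : r < R := lt_of_le_of_ne (le_csSup hbd hrA) (fun h => hRA (h ▸ hrA))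
        have h5 : k r < b t - ε := hc ⟨hcr, hrR⟩
        have := abs_le.1 (hosc r hrA.1 hrA.2.1)
        have := hrA.2.2
        linarith
    have hkRt : k R ≤ k t := by
      refine hup R t (hs.trans hsR.le) hRt fun r hr hrt => ?_
      by_contra h
      push Not at h
      have : r ∈ A := ⟨hsR.trans hr, hrt, h⟩
      exact absurd (le_csSup hbd this) (not_le.2 hr)
    linarith

lemma aux_cadlag_neg {f : ℝ → ℝ} (hf : CadlagOn f) : CadlagOn (fun t => - f t) :=
  ⟨fun t ht => (hf.1 t ht).neg, fun t ht => by
    obtain ⟨L, hL⟩ := hf.2 t ht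
    exact ⟨-L, hL.neg⟩⟩

lemma aux_step (a b k : ℝ → ℝ) (hk : CadlagOn k)
    (hab : ∀ t : ℝ, 0 ≤ t → a t ≤ k t ∧ k t ≤ b t)
    (hup : ∀ t q : ℝ, 0 ≤ t → t ≤ q → (∀ s, t < s → s ≤ q → k s < b s) → k t ≤ k q)
    (hdn : ∀ t q : ℝ, 0 ≤ t → t ≤ q → (∀ s, t < s → s ≤ q → a s < k s) → k q ≤ k t)
    (hju : ∀ t : ℝ, 0 < t → ∀ L, Tendsto k (𝓝[<] t) (𝓝 L) → k t < b t → L ≤ k t)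
    (hjd : ∀ t : ℝ, 0 < t → ∀ L, Tendsto k (𝓝[<] t) (𝓝 L) → a t < k t → k t ≤ L)
    (s t ε x : ℝ) (hs : 0 ≤ s) (hst : s < t) (hε : 0 ≤ ε)
    (hosca : ∀ r, s < r → r ≤ t → |a r - a t| ≤ ε)
    (hoscb : ∀ r, s < r → r ≤ t → |b r - b t| ≤ ε) :
    |max (min x (b t)) (a t) - k t| ≤ max |x - k s| ε := by
  have h1 := aux_step_upper a b k hk hab hup hju s t ε x hs hst hε hoscb
  have h2 := aux_step_upper (fun t => - b t) (fun t => - a t) (fun t => - k t)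
    (aux_cadlag_neg hk) (fun t ht => ⟨neg_le_neg (hab t ht).2, neg_le_neg (hab t ht).1⟩)
    (fun t q ht htq H => neg_le_neg (hdn t q ht htq fun s h1 h2 => neg_lt_neg_iff.1 (H s h1 h2)))
    (fun t ht L hL H => by
      have := hjd t ht (-L) (by simpa using hL.neg) (neg_lt_neg_iff.1 H)
      linarith)
    s t ε (-x) hs hst hε (fun r h1 h2 => by
      have := hosca r h1 h2
      rw [← abs_neg]
      convert this using 2
      ring)
  have hat := hab t (hs.trans hst.le)
  have e : max (min (-x) (-a t)) (-b t) = - max (min x (b t)) (a t) := by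
    rw [min_neg_neg, max_neg_neg, max_comm (min x (b t)), max_min_distrib_left, max_eq_right (hat.1.trans hat.2), max_comm]
  rw [e] at h2
  rw [abs_le']
  refine ⟨h1.trans (max_le_max (le_abs_self _) le_rfl), ?_⟩
  have h3 : -x - -k s ≤ |x - k s| := by
    have := neg_le_abs (x - k s)
    linarith
  have := h2.trans (max_le_max h3 le_rfl)
  linarith

lemma aux_left {f : ℝ → ℝ} (hf : CadlagOn f) (τ ε : ℝ) (hτ : 0 ≤ τ) (hε : 0 < ε) :
    ∃ L δ : ℝ, 0 < δ ∧ (0 < τ → Tendsto f (𝓝[<] τ) (𝓝 L)) ∧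
      ∀ s, 0 ≤ s → s < τ → τ - δ < s → |f s - L| ≤ ε := by
  rcases hτ.eq_or_lt with h0 | hpos
  · exact ⟨0, 1, one_pos, fun h => by linarith, fun s h1 h2 => by linarith⟩
  · obtain ⟨L, hL⟩ := hf.2 τ hpos
    have hev := hL (Metric.closedBall_mem_nhds L hε)
    obtain ⟨c, hcR, hc⟩ := (mem_nhdsLT_iff_exists_Ioo_subset).1 hev
    refine ⟨L, τ - c, by simpa using hcR, fun _ => hL, fun s _ h1 h2 => ?_⟩
    have : s ∈ f ⁻¹' Metric.closedBall L ε := hc ⟨by linarith, h1⟩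
    simpa [Real.dist_eq] using this

lemma aux_right {f : ℝ → ℝ} (hf : CadlagOn f) (τ ε : ℝ) (hτ : 0 ≤ τ) (hε : 0 < ε) :
    ∃ δ : ℝ, 0 < δ ∧ ∀ s, τ ≤ s → s < τ + δ → |f s - f τ| ≤ ε := by
  have hev := (hf.1 τ hτ) (Metric.closedBall_mem_nhds (f τ) hε)
  obtain ⟨c, hcR, hc⟩ := (mem_nhdsGE_iff_exists_Ico_subset).1 hev
  refine ⟨c - τ, by simpa using hcR, fun s h1 h2 => ?_⟩
  have : s ∈ f ⁻¹' Metric.closedBall (f τ) ε := hc ⟨h1, by linarith⟩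
  simpa [Real.dist_eq] using this

lemma aux_osc {f : ℝ → ℝ} (hf : CadlagOn f) (τ ε : ℝ) (hτ : 0 ≤ τ) (hε : 0 < ε) :
    ∃ δ : ℝ, 0 < δ ∧ (∀ r t, 0 ≤ r → r < τ → 0 ≤ t → t < τ → τ - δ < r → τ - δ < t →
      |f r - f t| ≤ ε) ∧
      ∀ r t, τ ≤ r → r < τ + δ → τ ≤ t → t < τ + δ → |f r - f t| ≤ ε := by
  obtain ⟨L, d1, hd1, -, h1⟩ := aux_left hf τ (ε / 2) hτ (by linarith)
  obtain ⟨d2, hd2, h2⟩ := aux_right hf τ (ε / 2) hτ (by linarith)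
  have m1 := min_le_left d1 d2
  have m2 := min_le_right d1 d2
  refine ⟨min d1 d2, lt_min hd1 hd2, fun r t a1 a2 a3 a4 a5 a6 => ?_,
    fun r t a1 a2 a3 a4 => ?_⟩
  · have p1 := abs_le.1 (h1 r a1 a2 (by linarith))
    have p2 := abs_le.1 (h1 t a3 a4 (by linarith))
    exact abs_le.2 ⟨by linarith, by linarith⟩
  · have p1 := abs_le.1 (h2 r a1 (by linarith))
    have p2 := abs_le.1 (h2 t a3 (by linarith))
    exact abs_le.2 ⟨by linarith, by linarith⟩

lemma aux_cross (x L b b' a a' ζ d : ℝ) (hx : |x - L| ≤ d) (hζ : ζ ≤ d)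
    (hb : |b - b'| ≤ ζ) (ha : |a - a'| ≤ ζ) :
    |max (min x b) a - max (min L b') a'| ≤ d := by
  refine (abs_max_sub_max_le_max _ _ _ _).trans (max_le ?_ (ha.trans hζ))
  exact (abs_min_sub_min_le_max _ _ _ _).trans (max_le hx (hb.trans hζ))

lemma aux_det (a b k : ℝ → ℝ) (ha : CadlagOn a) (hb : CadlagOn b) (hk : CadlagOn k)
    (hk0 : k 0 = 0)
    (hab : ∀ t : ℝ, 0 ≤ t → a t ≤ k t ∧ k t ≤ b t)
    (hup : ∀ t q : ℝ, 0 ≤ t → t ≤ q → (∀ s, t < s → s ≤ q → k s < b s) → k t ≤ k q)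
    (hdn : ∀ t q : ℝ, 0 ≤ t → t ≤ q → (∀ s, t < s → s ≤ q → a s < k s) → k q ≤ k t)
    (hju : ∀ t : ℝ, 0 < t → ∀ L, Tendsto k (𝓝[<] t) (𝓝 L) → k t < b t → L ≤ k t)
    (hjd : ∀ t : ℝ, 0 < t → ∀ L, Tendsto k (𝓝[<] t) (𝓝 L) → a t < k t → k t ≤ L)
    (kn : ℕ → ℕ → ℝ) (hkn0 : ∀ n, kn n 0 = 0)
    (hrec : ∀ n : ℕ, 1 ≤ n → ∀ j : ℕ, kn n (j + 1) =
      max (min (kn n j) (b (((j : ℝ) + 1) / n))) (a (((j : ℝ) + 1) / n)))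
    (ε : ℝ) (hε : 0 < ε) (T : ℝ) (ε' : ℝ) (hεε' : ε < ε') :
    ∀ᶠ n : ℕ in atTop, ∀ j : ℕ, (j : ℝ) / n ≤ T → |kn n j - k ((j : ℝ) / n)| ≤ ε' := by
  set S : Set ℝ := {T | 0 ≤ T ∧ ∀ ε' > ε, ∀ᶠ n : ℕ in atTop, ∀ j : ℕ, (j : ℝ) / n ≤ T →
    |kn n j - k ((j : ℝ) / n)| ≤ ε'} with hS
  have h0S : (0 : ℝ) ∈ S := by
    refine ⟨le_rfl, fun e he => ?_⟩
    filter_upwards [eventually_ge_atTop 1] with n hn j hj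
    have hn' : (0 : ℝ) < n := by exact_mod_cast hn
    have : (j : ℝ) ≤ 0 := by
      rw [div_le_iff₀ hn'] at hj; simpa using hj
    have hj0 : j = 0 := by
      have : j ≤ 0 := by exact_mod_cast this
      omega
    subst hj0
    simp [hkn0, hk0]
    linarith
  suffices hnb : ¬ BddAbove S by
    rw [not_bddAbove_iff] at hnb
    obtain ⟨T1, hT1, hlt⟩ := hnb T
    filter_upwards [hT1.2 ε' hεε'] with n hn j hj
    exact hn j (hj.trans hlt.le)
  intro hbd
  set τ := sSup S with hτdef
  have hτ : 0 ≤ τ := le_csSup hbd h0S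
  obtain ⟨da, hda, ha1, ha2⟩ := aux_osc ha τ ε hτ hε
  obtain ⟨db, hdb, hb1, hb2⟩ := aux_osc hb τ ε hτ hε
  obtain ⟨δ, hδ, hδa, hδb⟩ : ∃ δ : ℝ, 0 < δ ∧ δ ≤ da ∧ δ ≤ db :=
    ⟨min da db, lt_min hda hdb, min_le_left _ _, min_le_right _ _⟩
  suffices hmem : τ + δ / 2 ∈ S by
    have := le_csSup hbd hmem
    linarith
  refine ⟨by linarith, fun e he => ?_⟩
  obtain ⟨ζ, hζ, hζe⟩ : ∃ ζ : ℝ, 0 < ζ ∧ ε + 4 * ζ = e := ⟨(e - ε) / 4, by linarith, by ring⟩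
  obtain ⟨L, d1, hd1, hL, hL1⟩ := aux_left hk τ ζ hτ hζ
  obtain ⟨d2, hd2, hk2⟩ := aux_right hk τ ζ hτ hζ
  obtain ⟨d3, hd3, ha3⟩ := aux_right ha τ ζ hτ hζ
  obtain ⟨d4, hd4, hb4⟩ := aux_right hb τ ζ hτ hζ
  obtain ⟨δ1, hδ1, hδ1δ, hδ11, hδ12, hδ13, hδ14⟩ : ∃ δ1 : ℝ, 0 < δ1 ∧ δ1 ≤ δ ∧ δ1 ≤ d1 ∧
      δ1 ≤ d2 ∧ δ1 ≤ d3 ∧ δ1 ≤ d4 :=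
    ⟨min δ (min d1 (min d2 (min d3 d4))), by simp [*], by simp, by simp, by simp, by simp, by simp⟩
  have hT0 : max 0 (τ - δ1 / 2) ∈ S := by
    rcases le_total (τ - δ1 / 2) 0 with h | h
    · rwa [max_eq_left h]
    · rw [max_eq_right h]
      obtain ⟨T1, hT1, hlt⟩ := exists_lt_of_lt_csSup ⟨0, h0S⟩ (show τ - δ1 / 2 < sSup S by linarith)
      refine ⟨h, fun e he => ?_⟩
      filter_upwards [hT1.2 e he] with n hn j hj
      exact hn j (hj.trans hlt.le)
  have hmesh : ∀ᶠ n : ℕ in atTop, (1 : ℝ) / n < δ1 / 2 :=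
    (tendsto_one_div_atTop_nhds_zero_nat (𝕜 := ℝ)).eventually (gt_mem_nhds (by linarith))
  filter_upwards [eventually_ge_atTop 1, hmesh, hT0.2 (ε + ζ) (by linarith)] with n hn hm hE
  have hn' : (0 : ℝ) < n := by exact_mod_cast hn
  have key : ∀ j : ℕ, (j : ℝ) / n ≤ τ + δ / 2 →
      ((j : ℝ) / n < τ → |kn n j - k ((j : ℝ) / n)| ≤ ε + ζ) ∧
      |kn n j - k ((j : ℝ) / n)| ≤ ε + 4 * ζ := by
    intro j
    induction j with
    | zero => 
      intro _
      have : |kn n 0 - k (((0 : ℕ) : ℝ) / n)| = 0 := by simp [hkn0, hk0]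
      rw [this]
      exact ⟨fun _ => by linarith, by linarith⟩
    | succ j ih =>
      intro hj
      push_cast at hj ⊢
      rw [hrec n hn j]
      set s : ℝ := (j : ℝ) / n with hs
      have hs0 : 0 ≤ s := by positivity
      have hts : ((j : ℝ) + 1) / n = s + 1 / n := by rw [hs]; ring
      have h1n : (0 : ℝ) < 1 / n := by positivity
      set t : ℝ := ((j : ℝ) + 1) / n with ht
      have hst : s < t := by linarith
      obtain ⟨ih1, ih2⟩ := ih (by linarith)
      by_cases htτ : t < τ
      · suffices h : |max (min (kn n j) (b t)) (a t) - k t| ≤ ε + ζ from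
          ⟨fun _ => h, by linarith⟩
        by_cases htT : t ≤ max 0 (τ - δ1 / 2)
        · have := hE (j + 1) (by push_cast; exact htT)
          rw [hrec n hn j] at this
          push_cast at this
          exact this
        · push Not at htT
          have := le_max_right 0 (τ - δ1 / 2)
          have h := aux_step a b k hk hab hup hdn hju hjd s t ε (kn n j) hs0 hst hε.le
            (fun r h1 h2 => ha1 r t (by linarith) (by linarith) (by linarith) htτ
              (by linarith) (by linarith))
            (fun r h1 h2 => hb1 r t (by linarith) (by linarith) (by linarith) htτ
              (by linarith) (by linarith))
          exact h.trans (max_le (ih1 (by linarith)) (by linarith))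
      · refine ⟨fun h => absurd h htτ, ?_⟩
        push Not at htτ
        by_cases hsτ : s < τ
        · have hτpos : 0 < τ := by linarith
          have hLk : k τ = max (min L (b τ)) (a τ) := by
            have q1 := hju τ hτpos L (hL hτpos)
            have q2 := hjd τ hτpos L (hL hτpos)
            obtain ⟨q3, q4⟩ := hab τ hτ
            rcases q3.lt_or_eq with q5 | q5
            · have q6 := q2 q5
              rcases q4.lt_or_eq with q7 | q7
              · have : L = k τ := le_antisymm (q1 q7) q6
                rw [this, min_eq_left q4, max_eq_left q3]
              · rw [min_eq_right (by linarith), max_eq_left (by linarith), q7]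
            · rcases q4.lt_or_eq with q7 | q7
              · have := q1 q7
                rw [max_eq_right ((min_le_left _ _).trans (by linarith)), q5]
              · rw [max_eq_right ((min_le_right _ _).trans (by linarith)), q5]
          have c1 := hL1 s hs0 hsτ (by linarith)
          have c2 := hk2 t htτ (by linarith)
          have c3 := ha3 t htτ (by linarith)
          have c4 := hb4 t htτ (by linarith)
          have c5 : |kn n j - L| ≤ ε + 2 * ζ := by
            have p1 := abs_le.1 (ih1 hsτ)
            have p2 := abs_le.1 c1
            exact abs_le.2 ⟨by linarith, by linarith⟩
          have c6 := aux_cross (kn n j) L (b t) (b τ) (a t) (a τ) ζ _ c5 (by linarith) c4 c3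
          rw [← hLk] at c6
          have p1 := abs_le.1 c6
          have p2 := abs_le.1 c2
          exact abs_le.2 ⟨by linarith, by linarith⟩
        · push Not at hsτ
          have h := aux_step a b k hk hab hup hdn hju hjd s t ε (kn n j) hs0 hst hε.le
            (fun r h1 h2 => ha2 r t (by linarith) (by linarith) (by linarith) (by linarith))
            (fun r h1 h2 => hb2 r t (by linarith) (by linarith) (by linarith) (by linarith))
          exact h.trans (max_le ih2 (by linarith))
  intro j hj
  rw [← hζe]
  exact (key j hj).2

/-- L1 convergence along a filter of nonnegative times. -/
lemma aux_L1 {Ω : Type*} [MeasurableSpace Ω] (μ : Measure Ω) [IsProbabilityMeasure μ]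
    (Y : ℝ → Ω → ℝ) (hY : NiceProcess μ Y) (τ : ℝ) (hτ : 0 ≤ τ) (F : Filter ℝ)
    [F.IsCountablyGenerated] [F.NeBot] (hF : ∀ᶠ s in F, s ∈ Set.Icc 0 (τ + 1))
    (Z : Ω → ℝ) (hZ : ∀ ω, Tendsto (fun s => Y s ω) F (𝓝 (Z ω))) :
    Integrable Z μ ∧ Tendsto (fun s => ∫ ω, |Y s ω - Z ω| ∂μ) F (𝓝 0) := by
  have hUI := hY.unifInt (τ + 1) (by linarith)
  have hle : (0 : ℝ) ≤ τ + 1 := by linarith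
  have main : ∀ v : ℕ → ℝ, Tendsto v atTop F → MemLp Z 1 μ ∧
      Tendsto (fun n => ∫ ω, |Y (v n) ω - Z ω| ∂μ) atTop (𝓝 0) := by
    intro v hv
    let w : ℕ → Set.Icc (0 : ℝ) (τ + 1) := fun n => Set.projIcc 0 (τ + 1) hle (v n)
    have hwv : ∀ᶠ n in atTop, ((w n : Set.Icc (0 : ℝ) (τ + 1)) : ℝ) = v n := by
      filter_upwards [hv.eventually hF] with n hn
      simp [w, Set.projIcc_of_mem hle hn]
    have hint : ∀ n, Integrable (Y (w n)) μ := fun n => hY.integrable _ (w n).2.1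
    have hlim : ∀ ω, Tendsto (fun n => Y (w n) ω) atTop (𝓝 (Z ω)) := fun ω =>
      ((hZ ω).comp hv).congr' (by
        filter_upwards [hwv] with n hn
        simp [hn])
    have hZm : AEStronglyMeasurable Z μ :=
      aestronglyMeasurable_of_tendsto_ae atTop (fun n => (hint n).aestronglyMeasurable)
        (Eventually.of_forall hlim)
    have hUIw : UnifIntegrable (fun n => Y (w n)) 1 μ := fun e he => by
      obtain ⟨d, hd, H⟩ := hUI.2.1 he
      exact ⟨d, hd, fun i => H (w i)⟩
    have hZL : MemLp Z 1 μ := by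
      obtain ⟨C, hC⟩ := hUI.2.2
      refine ⟨hZm, lt_of_le_of_lt (Lp.eLpNorm_lim_le_liminf_eLpNorm
        (fun n => (hint n).aestronglyMeasurable) Z (Eventually.of_forall hlim)) ?_⟩
      refine lt_of_le_of_lt ?_ (ENNReal.coe_lt_top (r := C))
      refine Filter.liminf_le_of_frequently_le' ?_
      exact Frequently.of_forall fun n => hC (w n)
    refine ⟨hZL, ?_⟩
    have hconv := tendsto_Lp_finite_of_tendsto_ae (μ := μ) (p := 1) le_rfl ENNReal.one_ne_top
      (fun n => (hint n).aestronglyMeasurable) hZL hUIw (Eventually.of_forall hlim)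
    have h2 := (ENNReal.tendsto_toReal ENNReal.zero_ne_top).comp hconv
    simp only [ENNReal.toReal_zero] at h2
    refine h2.congr' ?_
    filter_upwards [hwv] with n hn
    have hZi : Integrable Z μ := memLp_one_iff_integrable.1 hZL
    have : Integrable (Y (w n) - Z) μ := (hint n).sub hZi
    simp only [Function.comp]
    rw [eLpNorm_one_eq_lintegral_enorm, ← integral_norm_eq_lintegral_enorm this.1]
    simp [hn, Real.norm_eq_abs]
  obtain ⟨v, hv⟩ := exists_seq_tendsto F
  exact ⟨memLp_one_iff_integrable.1 (main v hv).1, tendsto_of_seq_tendsto fun v hv => (main v hv).2⟩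

section barrier
variable {Ω : Type*} [MeasurableSpace Ω] {μ : Measure Ω} [IsProbabilityMeasure μ]
    {h : ℝ → ℝ → ℝ} {Mh Lh ch Ch : ℝ} {Y : ℝ → Ω → ℝ}

lemma aux_int (hH : CondH h Mh Lh ch Ch) {Z : Ω → ℝ} (hZ : Integrable Z μ) (t x : ℝ)
    (ht : 0 ≤ t) : Integrable (fun ω => h t (Z ω + x)) μ := by
  have hm : Measurable (h t) := hH.meas.comp measurable_prodMk_left
  have hZx : Integrable (fun ω => Z ω + x) μ := hZ.add (integrable_const x)
  refine Integrable.mono' (g := fun ω => Mh * (1 + |Z ω + x|))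
    (((integrable_const (1:ℝ)).add hZx.abs).const_mul Mh)
    (hm.comp_aemeasurable hZx.aemeasurable).aestronglyMeasurable
    (Eventually.of_forall fun ω => ?_)
  simpa using hH.growth t (Z ω + x) ht

lemma aux_mono (hH : CondH h Mh Lh ch Ch) (hY : NiceProcess μ Y) (t x y : ℝ) (ht : 0 ≤ t)
    (hxy : x ≤ y) :
    ch * (y - x) ≤ (∫ ω, h t (Y t ω + y) ∂μ) - ∫ ω, h t (Y t ω + x) ∂μ := by
  have hi := hY.integrable t ht
  rw [← integral_sub (aux_int hH hi t y ht) (aux_int hH hi t x ht)]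
  have : ch * (y - x) = ∫ _ω, ch * (y - x) ∂μ := by simp
  rw [this]
  refine integral_mono (integrable_const _) ((aux_int hH hi t y ht).sub (aux_int hH hi t x ht))
    fun ω => ?_
  have h1 := hH.lip_lower t (Y t ω + y) (Y t ω + x) ht
  have h2 := (hH.strict_mono t ht).monotone (show Y t ω + x ≤ Y t ω + y by linarith)
  rw [abs_of_nonneg (by linarith), abs_of_nonneg (by linarith)] at h1
  simp only
  linarith

lemma aux_abs (hH : CondH h Mh Lh ch Ch) (hY : NiceProcess μ Y) (t x y : ℝ) (ht : 0 ≤ t) :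
    ch * |y - x| ≤ |(∫ ω, h t (Y t ω + y) ∂μ) - ∫ ω, h t (Y t ω + x) ∂μ| := by
  rcases le_total x y with hxy | hxy
  · rw [abs_of_nonneg (sub_nonneg.2 hxy)]
    exact (aux_mono hH hY t x y ht hxy).trans (le_abs_self _)
  · rw [abs_sub_comm y x, abs_sub_comm (∫ ω, h t (Y t ω + y) ∂μ), abs_of_nonneg (sub_nonneg.2 hxy)]
    exact (aux_mono hH hY t y x ht hxy).trans (le_abs_self _)

lemma aux_time (hH : CondH h Mh Lh ch Ch) (hY : NiceProcess μ Y) (s t x : ℝ) (hs : 0 ≤ s)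
    (ht : 0 ≤ t) :
    |(∫ ω, h t (Y t ω + x) ∂μ) - ∫ ω, h s (Y s ω + x) ∂μ| ≤
      Lh * |t - s| + Ch * ∫ ω, |Y t ω - Y s ω| ∂μ := by
  have hi := hY.integrable t ht
  have hi' := hY.integrable s hs
  have hd : Integrable (fun ω => |Y t ω - Y s ω|) μ := (hi.sub hi').abs
  rw [← integral_sub (aux_int hH hi t x ht) (aux_int hH hi' s x hs)]
  have : Lh * |t - s| + Ch * ∫ ω, |Y t ω - Y s ω| ∂μ =
      ∫ ω, (Lh * |t - s| + Ch * |Y t ω - Y s ω|) ∂μ := by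
    rw [integral_add (integrable_const _) (hd.const_mul _)]
    simp [integral_const_mul]
  rw [this]
  refine (abs_integral_le_integral_abs).trans (integral_mono
    ((aux_int hH hi t x ht).sub (aux_int hH hi' s x hs)).abs
    ((integrable_const _).add (hd.const_mul _)) fun ω => ?_)
  have h1 := hH.lip_time s t (Y t ω + x) hs ht
  have h2 := hH.lip_upper s (Y t ω + x) (Y s ω + x) hs
  have h3 := abs_sub_le (h t (Y t ω + x)) (h s (Y t ω + x)) (h s (Y s ω + x))
  have e : Y t ω + x - (Y s ω + x) = Y t ω - Y s ω := by ring
  rw [e] at h2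
  simp only
  linarith

lemma aux_barrier_bound (hH : CondH h Mh Lh ch Ch) (hY : NiceProcess μ Y) (l a : ℝ → ℝ)
    (ha : ∀ t, 0 ≤ t → (∫ ω, h t (Y t ω + a t) ∂μ) = l t) (s t : ℝ) (hs : 0 ≤ s) (ht : 0 ≤ t) :
    |a t - a s| ≤ (|l t - l s| + (Lh * |t - s| + Ch * ∫ ω, |Y t ω - Y s ω| ∂μ)) / ch := by
  rw [le_div_iff₀ hH.ch_pos, mul_comm]
  refine (aux_abs hH hY t (a s) (a t) ht).trans ?_
  have h1 := aux_time hH hY s t (a s) hs ht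
  rw [ha t ht]
  rw [ha s hs] at h1
  have h2 := abs_sub_le (l t) (l s) (∫ ω, h t (Y t ω + a s) ∂μ)
  rw [abs_sub_comm (l s)] at h2
  linarith

lemma aux_barrier_cadlag (hH : CondH h Mh Lh ch Ch) (hY : NiceProcess μ Y) (l a : ℝ → ℝ)
    (hl : CadlagOn l)
    (ha : ∀ t, 0 ≤ t → (∫ ω, h t (Y t ω + a t) ∂μ) = l t) : CadlagOn a := by
  constructor
  · intro τ hτ
    have hF : ∀ᶠ s in 𝓝[≥] τ, s ∈ Set.Icc 0 (τ + 1) := by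
      filter_upwards [Icc_mem_nhdsGE (show τ < τ + 1 by linarith)] with s hs
      exact ⟨hτ.trans hs.1, hs.2⟩
    have h1 := (aux_L1 μ Y hY τ hτ (𝓝[≥] τ) hF (Y τ) fun ω => (hY.cadlag ω).1 τ hτ).2
    have h2 : Tendsto (fun s => |l s - l τ|) (𝓝[≥] τ) (𝓝 0) := by
      have : Tendsto l (𝓝[≥] τ) (𝓝 (l τ)) := hl.1 τ hτ
      simpa using (this.sub_const (l τ)).abs
    have h3 : Tendsto (fun s : ℝ => |s - τ|) (𝓝[≥] τ) (𝓝 0) := by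
      have : Tendsto (fun s : ℝ => s) (𝓝[≥] τ) (𝓝 τ) := tendsto_id.mono_left nhdsWithin_le_nhds
      simpa using (this.sub_const τ).abs
    have h4 := (h2.add ((h3.const_mul Lh).add (h1.const_mul Ch))).div_const ch
    simp only [mul_zero, add_zero, zero_div] at h4
    have h5 : Tendsto a (𝓝[≥] τ) (𝓝 (a τ)) := by
      rw [tendsto_iff_dist_tendsto_zero]
      refine squeeze_zero' (Eventually.of_forall fun s => dist_nonneg) ?_ h4
      filter_upwards [hF] with s hs
      rw [Real.dist_eq]
      exact aux_barrier_bound hH hY l a ha τ s hτ hs.1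
    exact h5
  · intro τ hτ
    have hF : ∀ᶠ s in 𝓝[<] τ, s ∈ Set.Icc 0 (τ + 1) := by
      filter_upwards [Ioo_mem_nhdsLT hτ] with s hs
      exact ⟨hs.1.le, by linarith [hs.2]⟩
    choose Z hZ using fun ω => (hY.cadlag ω).2 τ hτ
    obtain ⟨hZi, h1⟩ := aux_L1 μ Y hY τ hτ.le (𝓝[<] τ) hF Z hZ
    obtain ⟨L, hL⟩ := hl.2 τ hτ
    have h2 : Tendsto (fun s => |l s - L|) (𝓝[<] τ) (𝓝 0) := by
      simpa using (hL.sub_const L).abs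
    have h3 : Tendsto (fun s : ℝ => |s - τ|) (𝓝[<] τ) (𝓝 0) := by
      have : Tendsto (fun s : ℝ => s) (𝓝[<] τ) (𝓝 τ) := tendsto_id.mono_left nhdsWithin_le_nhds
      simpa using (this.sub_const τ).abs
    have h4 := (h2.add ((h3.const_mul Lh).add (h1.const_mul Ch))).div_const ch
    simp only [mul_zero, add_zero, zero_div] at h4
    have hbd : ∀ s t, s ∈ Set.Icc 0 (τ + 1) → t ∈ Set.Icc 0 (τ + 1) → |a t - a s| ≤
        (|l t - L| + (Lh * |t - τ| + Ch * ∫ ω, |Y t ω - Z ω| ∂μ)) / ch +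
        (|l s - L| + (Lh * |s - τ| + Ch * ∫ ω, |Y s ω - Z ω| ∂μ)) / ch := by
      intro s t hs ht
      refine (aux_barrier_bound hH hY l a ha s t hs.1 ht.1).trans ?_
      rw [← add_div]
      refine div_le_div_of_nonneg_right ?_ hH.ch_pos.le
      have e1 := abs_sub_le (l t) L (l s)
      rw [abs_sub_comm L] at e1
      have e2 := abs_sub_le t τ s
      rw [abs_sub_comm τ] at e2
      have i1 : Integrable (fun ω => |Y t ω - Z ω|) μ := ((hY.integrable t ht.1).sub hZi).abs
      have i2 : Integrable (fun ω => |Y s ω - Z ω|) μ := ((hY.integrable s hs.1).sub hZi).abs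
      have e3 : (∫ ω, |Y t ω - Y s ω| ∂μ) ≤ (∫ ω, |Y t ω - Z ω| ∂μ) + ∫ ω, |Y s ω - Z ω| ∂μ := by
        rw [← integral_add i1 i2]
        refine integral_mono ((hY.integrable t ht.1).sub (hY.integrable s hs.1)).abs
          (i1.add i2) fun ω => ?_
        have := abs_sub_le (Y t ω) (Z ω) (Y s ω)
        rw [abs_sub_comm (Z ω)] at this
        exact this
      have e4 := mul_le_mul_of_nonneg_left e2 hH.Lh_pos.le
      have e5 := mul_le_mul_of_nonneg_left e3 hH.Ch_pos.le
      linarith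
    have hC : Cauchy (Filter.map a (𝓝[<] τ)) := by
      rw [Metric.cauchy_iff]
      refine ⟨inferInstance, fun e he => ?_⟩
      have hev := (h4.eventually (gt_mem_nhds (show (0:ℝ) < e / 2 by linarith))).and hF
      refine ⟨a '' _, image_mem_map hev, ?_⟩
      rintro _ ⟨x, hx, rfl⟩ _ ⟨y, hy, rfl⟩
      rw [Real.dist_eq]
      have := hbd y x hy.2 hx.2
      have hx1 := hx.1
      have hy1 := hy.1
      linarith
    exact cauchy_iff_exists_le_nhds.1 hC

end barrier

/-- convergence of the discrete approximation scheme for the Skorokhod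
problem with mean minimality condition and two constraints. -/
theorem stmt_16 {Ω : Type*} [MeasurableSpace Ω] (μ : Measure Ω) [IsProbabilityMeasure μ]
    (h : ℝ → ℝ → ℝ) (Mh Lh ch Ch : ℝ) (hH : CondH h Mh Lh ch Ch)
    (Y : ℝ → Ω → ℝ) (hY : NiceProcess μ Y)
    (l u : ℝ → ℝ) (hl : CadlagOn l) (hu : CadlagOn u)
    (hlu : ∀ t : ℝ, 0 ≤ t → l t ≤ u t)
    (h0 : (∫ ω, h 0 (Y 0 ω) ∂μ) ∈ Set.Icc (l 0) (u 0))
    (lbar ubar : ℝ → ℝ)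
    (hlbar : ∀ t : ℝ, 0 ≤ t → (∫ ω, h t (Y t ω - (∫ ω', Y t ω' ∂μ) + lbar t) ∂μ) = l t)
    (hubar : ∀ t : ℝ, 0 ≤ t → (∫ ω, h t (Y t ω - (∫ ω', Y t ω' ∂μ) + ubar t) ∂μ) = u t)
    (X : ℝ → Ω → ℝ) (k : ℝ → ℝ) (hsol : MeanSP μ h Y l u X k)
    (kn : ℕ → ℕ → ℝ) (hkn0 : ∀ n, kn n 0 = 0)
    (hknrec : ∀ n : ℕ, 1 ≤ n → ∀ j : ℕ,
      kn n (j + 1) = max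
        (min (kn n j)
          (ubar (((j : ℝ) + 1) / n) - ∫ ω, Y (((j : ℝ) + 1) / n) ω ∂μ))
        (lbar (((j : ℝ) + 1) / n) - ∫ ω, Y (((j : ℝ) + 1) / n) ω ∂μ))
    (Xn : ℕ → ℕ → Ω → ℝ)
    (hXn : ∀ n j ω, Xn n j ω = Y ((j : ℝ) / n) ω + kn n j)
    (q : ℝ) (hq : 0 ≤ q) :
    Filter.Tendsto
      (fun n : ℕ => sSup ((fun j : ℕ => |kn n j - k ((j : ℝ) / n)|) ''
        {j : ℕ | (j : ℝ) / n ≤ q}))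
      Filter.atTop (nhds 0) ∧
    ∀ᵐ ω ∂μ, Filter.Tendsto
      (fun n : ℕ => sSup ((fun j : ℕ =>
          |Xn n j ω - X ((j : ℝ) / n) ω| + |kn n j - k ((j : ℝ) / n)|) ''
        {j : ℕ | (j : ℝ) / n ≤ q}))
      Filter.atTop (nhds 0) := by
  obtain ⟨-, hkc, hk0, hX, hbar, hmin, hjump⟩ := hsol
  set a : ℝ → ℝ := fun t => lbar t - ∫ ω, Y t ω ∂μ with ha
  set b : ℝ → ℝ := fun t => ubar t - ∫ ω, Y t ω ∂μ with hb
  have haE : ∀ t, 0 ≤ t → (∫ ω, h t (Y t ω + a t) ∂μ) = l t := fun t ht => by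
    rw [← hlbar t ht]
    congr 1; ext ω; congr 1; simp only [ha]; ring
  have hbE : ∀ t, 0 ≤ t → (∫ ω, h t (Y t ω + b t) ∂μ) = u t := fun t ht => by
    rw [← hubar t ht]
    congr 1; ext ω; congr 1; simp only [hb]; ring
  have hXE : ∀ t, 0 ≤ t → (∫ ω, h t (X t ω) ∂μ) = ∫ ω, h t (Y t ω + k t) ∂μ := fun t ht => by
    simp only [hX t ht]
  have hsm : ∀ t, 0 ≤ t → StrictMono fun x => ∫ ω, h t (Y t ω + x) ∂μ := fun t ht x y hxy => by
    have h1 := aux_mono hH hY t x y ht hxy.le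
    have h2 := mul_pos hH.ch_pos (sub_pos.2 hxy)
    simp only
    linarith
  have hlt_u : ∀ t, 0 ≤ t → k t < b t → (∫ ω, h t (X t ω) ∂μ) < u t := fun t ht hlt => by
    rw [hXE t ht, ← hbE t ht]
    exact hsm t ht hlt
  have hlt_l : ∀ t, 0 ≤ t → a t < k t → l t < ∫ ω, h t (X t ω) ∂μ := fun t ht hlt => by
    rw [hXE t ht, ← haE t ht]
    exact hsm t ht hlt
  have hab : ∀ t, 0 ≤ t → a t ≤ k t ∧ k t ≤ b t := fun t ht => by
    obtain ⟨h1, h2⟩ := hbar t ht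
    rw [hXE t ht] at h1 h2
    rw [← haE t ht] at h1
    rw [← hbE t ht] at h2
    exact ⟨(hsm t ht).le_iff_le.1 h1, (hsm t ht).le_iff_le.1 h2⟩
  have hdet := aux_det a b k (aux_barrier_cadlag hH hY l a hl haE)
    (aux_barrier_cadlag hH hY u b hu hbE) hkc hk0 hab
    (fun t q ht htq H => sub_nonneg.1 ((hmin t q ht htq).1 fun s h1 h2 =>
      hlt_u s (ht.trans h1.le) (H s h1 h2)))
    (fun t q ht htq H => sub_nonpos.1 ((hmin t q ht htq).2 fun s h1 h2 =>
      hlt_l s (ht.trans h1.le) (H s h1 h2)))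
    (fun t ht L hL H => by
      have := (hjump t ht).1 (hlt_u t ht.le H)
      rw [leftLim_eq_of_tendsto hL] at this
      linarith)
    (fun t ht L hL H => by
      have := (hjump t ht).2 (hlt_l t ht.le H)
      rw [leftLim_eq_of_tendsto hL] at this
      linarith)
    kn hkn0 hknrec
  have hfin : ∀ f : ℕ → ℕ → ℝ, (∀ n j, f n j = |kn n j - k ((j : ℝ) / n)| +
      |kn n j - k ((j : ℝ) / n)| ∨ f n j = |kn n j - k ((j : ℝ) / n)|) →
      Tendsto (fun n : ℕ => sSup (f n '' {j : ℕ | (j : ℝ) / n ≤ q})) atTop (𝓝 0) := by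
    intro f hf
    rw [Metric.tendsto_atTop']
    intro e he
    have hev := hdet (e / 8) (by linarith) q (e / 4) (by linarith)
    obtain ⟨N, hN⟩ := eventually_atTop.1 hev
    refine ⟨N, fun n hn => ?_⟩
    have hnn : 0 ≤ sSup (f n '' {j : ℕ | (j : ℝ) / n ≤ q}) := by
      refine Real.sSup_nonneg ?_
      rintro _ ⟨j, -, rfl⟩
      rcases hf n j with h | h <;> rw [h] <;> positivity
    have hle : sSup (f n '' {j : ℕ | (j : ℝ) / n ≤ q}) ≤ e / 2 := by
      refine Real.sSup_le ?_ (by linarith)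
      rintro _ ⟨j, hj, rfl⟩
      have := hN n hn.le j hj
      rcases hf n j with h | h <;> rw [h] <;> linarith
    rw [Real.dist_eq, sub_zero, abs_of_nonneg hnn]
    linarith
  refine ⟨hfin (fun n j => |kn n j - k ((j : ℝ) / n)|) fun n j => Or.inr rfl,
    Eventually.of_forall fun ω => ?_⟩
  refine hfin (fun n j => |Xn n j ω - X ((j : ℝ) / n) ω| + |kn n j - k ((j : ℝ) / n)|)
    fun n j => Or.inl ?_
  simp only [hXn, hX ((j : ℝ) / n) (by positivity) ω, add_sub_add_left_eq_sub]
end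
end
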